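/- arXiv:1310.5729 — 2 statements merged into one kernel-verified Lean document; each statement's English description precedes it below -/
import Mathlib

section
/- Let d ≥ 1 and let A and B be subsets of ℤ^d such that the lower density of A equals α > 0 and the Banach density of B is positive. Then A + B is strongly upper syndetic of level α; that is, for every infinite set S ⊆ ℕ there exists m ∈ ℕ such that for every k ∈ ℕ, limsup_{n∈S} (1/(2n+1)^d)·|{z ∈ [-n,n]^d : z + [-k,k]^d ⊆ A + B + [-m,m]^d}| ≥ α. -/
/-!
The level `α` is reached by combining two averaging arguments, both instances of the double count
`card_mul_vol_le_sum`.

*The set `B`.* For every `ε > 0` there is `m` such that `B + [-m, m]^d` has density at least `1 - ε`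
in some translate of `[-M, M]^d`, for every `M` (`exists_dense_window`): in a huge cube where the
density of `B` is almost its Banach density `β`, every subcube of a fixed large size has density at
most slightly more than `β`, so almost all of these subcubes must meet `B`.

*The set `A`.* Let `p ε` be the proportion of `z ∈ [-n, n]^d` such that `A` has density more than
`ε` in `z + [-N, N]^d`. These local densities lie in `[0, 1]` and have mean at least `α - o(1)`. The
same `ε > 0` then gives `p ε ≥ α - c` for all `c > 0`, with `N` and then `n ∈ S` arbitrarily large
(`exists_level`): if `ε = 1/2` fails by a definite amount `c₀`, then a tiny `ε` must work, since the
mean is at most `p (1/2) / 2 + p ε / 2 + ε`. This choice depends on `S`, but not on the scale `N`.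

*Conclusion.* If `A` has density more than `ε` near `z` and `B + [-m, m]^d` has density at least
`1 - ε/2` near `x`, pigeonhole puts the whole cube `z + x + [-k, k]^d` into `A + B + [-m, m]^d`,
provided `N` is large compared with `k` (`cubeAt_subset`). The fixed shift `x` is negligible as
`n → ∞`.
-/

open Filter Pointwise

/-- The `d`-dimensional cube `[-m, m]^d` in `ℤ^d`. -/
def cube (d m : ℕ) : Set (Fin d → ℤ) :=
  Set.Icc (fun _ => -(m : ℤ)) (fun _ => (m : ℤ))

/-- The translated cube `z + [-k, k]^d`. -/
def cubeAt (d k : ℕ) (z : Fin d → ℤ) : Set (Fin d → ℤ) :=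
  Set.Icc (fun i => z i - (k : ℤ)) (fun i => z i + (k : ℤ))

/-- Lower asymptotic density of `A ⊆ ℤ^d`. -/
noncomputable def lowerDensity (d : ℕ) (A : Set (Fin d → ℤ)) : ℝ :=
  liminf (fun n : ℕ => (Set.ncard (A ∩ cube d n) : ℝ) / (2 * (n : ℝ) + 1) ^ d) atTop

/-- (Upper) Banach density of `A ⊆ ℤ^d`; the limit defining it exists, so we may
express it as a `limsup`. -/
noncomputable def banachDensity (d : ℕ) (A : Set (Fin d → ℤ)) : ℝ :=
  limsup (fun n : ℕ =>
    (⨆ x : Fin d → ℤ, (Set.ncard (A ∩ cubeAt d n x) : ℝ)) / (2 * (n : ℝ) + 1) ^ d) atTop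

/-! ### Counting in cubes -/

/-- The finite cube `z + [-N, N]^d`, i.e. `cubeAt d N z` as a `Finset`. -/
noncomputable def box (d N : ℕ) (z : Fin d → ℤ) : Finset (Fin d → ℤ) :=
  Finset.Icc (fun i => z i - (N : ℤ)) (fun i => z i + (N : ℤ))

/-- The number of points of the cube `[-N, N]^d`, as a real number. -/
noncomputable def vol (d N : ℕ) : ℝ := (2 * (N : ℝ) + 1) ^ d

open Classical in
/-- The points of `X` in the cube `z + [-N, N]^d`. -/
noncomputable def slice (d : ℕ) (X : Set (Fin d → ℤ)) (N : ℕ) (z : Fin d → ℤ) :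
    Finset (Fin d → ℤ) :=
  (box d N z).filter (· ∈ X)

open Classical in
/-- The points `z` of `[-n, n]^d` such that `A` has density more than `ε` in `z + [-N, N]^d`. -/
noncomputable def richPoints (d : ℕ) (A : Set (Fin d → ℤ)) (ε : ℝ) (N n : ℕ) :
    Finset (Fin d → ℤ) :=
  (box d n 0).filter (fun z => ε * vol d N < ((slice d A N z).card : ℝ))

lemma mem_box {d N : ℕ} {z y : Fin d → ℤ} :
    y ∈ box d N z ↔ ∀ i, z i - N ≤ y i ∧ y i ≤ z i + N := by
  simp [box, Pi.le_def, forall_and]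

lemma mem_slice {d N : ℕ} {X : Set (Fin d → ℤ)} {z y : Fin d → ℤ} :
    y ∈ slice d X N z ↔ y ∈ box d N z ∧ y ∈ X := by
  simp [slice]

lemma mem_cubeAt {d N : ℕ} {z y : Fin d → ℤ} : y ∈ cubeAt d N z ↔ y ∈ box d N z := by
  simp [box, cubeAt]

lemma mem_cube {d N : ℕ} {y : Fin d → ℤ} : y ∈ cube d N ↔ y ∈ box d N 0 := by
  simp [box, cube]

lemma card_box (d N : ℕ) (z : Fin d → ℤ) : ((box d N z).card : ℝ) = vol d N := by
  have h : ∀ i : Fin d, (Finset.Icc (z i - (N : ℤ)) (z i + (N : ℤ))).card = 2 * N + 1 := by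
    intro i
    rw [Int.card_Icc]
    omega
  rw [box, Pi.card_Icc, Finset.prod_congr rfl (fun i _ => h i)]
  simp [vol]

lemma vol_pos (d N : ℕ) : 0 < vol d N := by
  unfold vol
  positivity

lemma card_slice_le (d : ℕ) (X : Set (Fin d → ℤ)) (N : ℕ) (z : Fin d → ℤ) :
    ((slice d X N z).card : ℝ) ≤ vol d N := by
  classical
  rw [← card_box d N z]
  exact_mod_cast Finset.card_le_card (Finset.filter_subset _ _)

lemma card_richPoints_le (d : ℕ) (A : Set (Fin d → ℤ)) (ε : ℝ) (N n : ℕ) :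
    ((richPoints d A ε N n).card : ℝ) ≤ vol d n := by
  rw [← card_box d n 0]
  exact_mod_cast Finset.card_le_card (Finset.filter_subset _ _)

lemma ncard_inter_cubeAt (d : ℕ) (X : Set (Fin d → ℤ)) (N : ℕ) (z : Fin d → ℤ) :
    (X ∩ cubeAt d N z).ncard = (slice d X N z).card := by
  rw [← Set.ncard_coe_finset]
  congr 1
  ext y
  simp [mem_slice, mem_cubeAt, and_comm]

lemma ncard_inter_cube (d : ℕ) (X : Set (Fin d → ℤ)) (N : ℕ) :
    (X ∩ cube d N).ncard = (slice d X N 0).card := by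
  rw [← Set.ncard_coe_finset]
  congr 1
  ext y
  simp [mem_slice, mem_cube, and_comm]

/-- Double counting of the pairs `(x, y)` with `y ∈ X`, `y` in a cube of radius `a`, and `x` within
`r` of `y`; every such `x` lies in the concentric cube of radius `a + r`. -/
lemma card_mul_vol_le_sum (d : ℕ) (X : Set (Fin d → ℤ)) (a r : ℕ) (c : Fin d → ℤ) :
    ((slice d X a c).card : ℝ) * vol d r
      ≤ ∑ x ∈ box d (a + r) c, ((slice d X r x).card : ℝ) := by
  classical
  have key := Finset.sum_card_bipartiteAbove_eq_sum_card_bipartiteBelow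
    (fun x y : Fin d → ℤ => y ∈ box d r x) (s := box d (a + r) c) (t := slice d X a c)
  have h1 : ∀ y ∈ slice d X a c,
      ((Finset.bipartiteBelow (fun x y : Fin d → ℤ => y ∈ box d r x) (box d (a + r) c) y).card : ℝ)
        = vol d r := by
    intro y hy
    rw [← card_box d r y]
    congr 2
    ext x
    rw [mem_slice, mem_box] at hy
    simp only [Finset.mem_bipartiteBelow, mem_box]
    refine ⟨fun h i => ?_, fun h => ⟨fun i => ?_, fun i => ?_⟩⟩
    · have := h.2 i
      constructor <;> linarith
    · have := h i
      have := hy.1 i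
      push_cast
      constructor <;> linarith
    · have := h i
      constructor <;> linarith
  have h2 : ((slice d X a c).card : ℝ) * vol d r = ∑ y ∈ slice d X a c,
      ((Finset.bipartiteBelow (fun x y : Fin d → ℤ => y ∈ box d r x)
        (box d (a + r) c) y).card : ℝ) := by
    rw [Finset.sum_congr rfl h1, Finset.sum_const, nsmul_eq_mul]
  rw [h2]
  have key' := congrArg (Nat.cast (R := ℝ)) key
  push_cast at key'
  rw [← key']
  refine Finset.sum_le_sum fun x _ => ?_
  have : Finset.bipartiteAbove (fun x y : Fin d → ℤ => y ∈ box d r x) (slice d X a c) x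
      ⊆ slice d X r x := by
    intro y hy
    simp only [Finset.mem_bipartiteAbove, mem_slice] at hy ⊢
    exact ⟨hy.2, hy.1.2⟩
  exact_mod_cast Finset.card_le_card this

lemma tendsto_vol_ratio (d r : ℕ) :
    Tendsto (fun n : ℕ => vol d n / vol d (n + r)) atTop (nhds 1) := by
  have h : Tendsto (fun n : ℕ => (2 * (n : ℝ) + 1) / (2 * ((n + r : ℕ) : ℝ) + 1)) atTop
      (nhds 1) := by
    have h1 : Tendsto (fun n : ℕ => 1 - (r : ℝ) / ((n : ℝ) + (r + 1 / 2))) atTop (nhds (1 - 0)) := by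
      refine tendsto_const_nhds.sub ?_
      exact tendsto_const_nhds.div_atTop
        (tendsto_atTop_add_const_right _ _ tendsto_natCast_atTop_atTop)
    rw [sub_zero] at h1
    refine h1.congr fun n => ?_
    have h2 : (n : ℝ) + (r + 1 / 2) ≠ 0 := by positivity
    have h3 : 2 * ((n + r : ℕ) : ℝ) + 1 ≠ 0 := by positivity
    push_cast at h3 ⊢
    field_simp
    ring
  have := h.pow d
  simpa [vol, div_pow] using this

lemma tendsto_vol_sub_ratio (d r : ℕ) :
    Tendsto (fun n : ℕ => vol d (n - r) / vol d n) atTop (nhds 1) := by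
  refine ((tendsto_vol_ratio d r).comp (tendsto_sub_atTop_nat r)).congr' ?_
  filter_upwards [eventually_ge_atTop r] with n hn
  simp [Nat.sub_add_cancel hn]

/-! ### Sets of positive Banach density -/

/-- A thickening of a set of positive Banach density is almost everything on some cubes of every
size, with the thickness `m` independent of the size `M` of the cube. -/
lemma exists_dense_window (d : ℕ) (B : Set (Fin d → ℤ)) (hB : 0 < banachDensity d B)
    (ε : ℝ) (hε : 0 < ε) (hε1 : ε < 1) :
    ∃ m : ℕ, ∀ M : ℕ, ∃ x : Fin d → ℤ,
      (1 - ε) * vol d M ≤ ((slice d (B + cube d m) M x).card : ℝ) := by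
  have hβ : banachDensity d B = limsup (fun n : ℕ =>
      (⨆ x : Fin d → ℤ, ((slice d B n x).card : ℝ)) / vol d n) atTop := by
    simp only [banachDensity, ncard_inter_cubeAt, vol]
  set β := banachDensity d B
  have hbdd : ∀ n : ℕ, BddAbove (Set.range fun x : Fin d → ℤ => ((slice d B n x).card : ℝ)) :=
    fun n => ⟨vol d n, by rintro _ ⟨x, rfl⟩; exact card_slice_le d B n x⟩
  have hu : ∀ n : ℕ, (⨆ x : Fin d → ℤ, ((slice d B n x).card : ℝ)) / vol d n ≤ 1 := fun n => by
    rw [div_le_one (vol_pos d n)]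
    exact ciSup_le fun x => card_slice_le d B n x
  have hl : ∀ n : ℕ, 0 ≤ (⨆ x : Fin d → ℤ, ((slice d B n x).card : ℝ)) / vol d n := fun n =>
    div_nonneg (Real.iSup_nonneg fun x => Nat.cast_nonneg _) (vol_pos d n).le
  have hup : IsBoundedUnder (· ≤ ·) atTop (fun n : ℕ =>
      (⨆ x : Fin d → ℤ, ((slice d B n x).card : ℝ)) / vol d n) := isBoundedUnder_of ⟨1, hu⟩
  have hlo : IsBoundedUnder (· ≥ ·) atTop (fun n : ℕ =>
      (⨆ x : Fin d → ℤ, ((slice d B n x).card : ℝ)) / vol d n) := isBoundedUnder_of ⟨0, hl⟩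
  -- Densities between `β * (1 - ε / 4)` and `β * (1 + ε / 4)` lose a factor
  -- `(1 - ε / 4) / (1 + ε / 4)`; passing to cubes of size `M` loses another `1 - ε / 4`.
  obtain ⟨l, hlt⟩ := (eventually_lt_of_limsup_lt
    (show limsup _ atTop < β * (1 + ε / 4) by rw [← hβ]; nlinarith) hup).exists
  have hlb : ∀ x, ((slice d B l x).card : ℝ) ≤ β * (1 + ε / 4) * vol d l := fun x => by
    rw [div_lt_iff₀ (vol_pos d l)] at hlt
    exact (le_ciSup (hbdd l) x).trans hlt.le
  refine ⟨l, fun M => ?_⟩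
  have hfreq := frequently_lt_of_lt_limsup hlo.isCoboundedUnder_le
    (show β * (1 - ε / 4) < limsup _ atTop by rw [← hβ]; nlinarith)
  have hratio : ∀ᶠ L : ℕ in atTop, 1 - ε / 4 < vol d L / vol d (L + (l + M)) :=
    (tendsto_vol_ratio d (l + M)).eventually_const_lt (by linarith)
  obtain ⟨L, hL1, hL2⟩ := (hfreq.and_eventually hratio).exists
  rw [lt_div_iff₀ (vol_pos _ _)] at hL1 hL2
  obtain ⟨c, hc⟩ := exists_lt_of_lt_ciSup hL1
  have step1 : (1 - ε / 4) * vol d L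
      ≤ (1 + ε / 4) * ((slice d (B + cube d l) (L + l) c).card : ℝ) := by
    have h1 := card_mul_vol_le_sum d B L l c
    have h2 : ∑ x ∈ box d (L + l) c, ((slice d B l x).card : ℝ)
        ≤ ((slice d (B + cube d l) (L + l) c).card : ℝ) * (β * (1 + ε / 4) * vol d l) := by
      rw [← nsmul_eq_mul, ← Finset.sum_const]
      have hsub : slice d (B + cube d l) (L + l) c ⊆ box d (L + l) c :=
        fun y hy => (mem_slice.1 hy).1
      rw [← Finset.sum_subset hsub (f := fun x => ((slice d B l x).card : ℝ))]
      · exact Finset.sum_le_sum fun x _ => hlb x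
      · intro x hx hx'
        rw [Nat.cast_eq_zero, Finset.card_eq_zero, Finset.eq_empty_iff_forall_notMem]
        intro b hb
        rw [mem_slice, mem_box] at hb
        refine hx' (mem_slice.2 ⟨hx, Set.mem_add.2 ⟨b, hb.2, x - b, ?_, by abel⟩⟩)
        rw [mem_cube, mem_box]
        intro i
        have := hb.1 i
        simp only [Pi.zero_apply, Pi.sub_apply]
        constructor <;> linarith
    have h3 : β * vol d l * ((1 - ε / 4) * vol d L)
        ≤ β * vol d l * ((1 + ε / 4) * ((slice d (B + cube d l) (L + l) c).card : ℝ)) := by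
      have := mul_le_mul_of_nonneg_right hc.le (vol_pos d l).le
      nlinarith
    exact le_of_mul_le_mul_left h3 (mul_pos hB (vol_pos d l))
  by_contra hcon
  push Not at hcon
  have h4 := card_mul_vol_le_sum d (B + cube d l) (L + l) M c
  have h5 : ∑ x ∈ box d (L + l + M) c, ((slice d (B + cube d l) M x).card : ℝ)
      ≤ vol d (L + (l + M)) * ((1 - ε) * vol d M) := by
    rw [← add_assoc, ← card_box d (L + l + M) c, ← nsmul_eq_mul, ← Finset.sum_const]
    exact Finset.sum_le_sum fun x _ => (hcon x).le
  have h6 : ((slice d (B + cube d l) (L + l) c).card : ℝ) ≤ vol d (L + (l + M)) * (1 - ε) := by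
    have : ((slice d (B + cube d l) (L + l) c).card : ℝ) * vol d M
        ≤ (vol d (L + (l + M)) * (1 - ε)) * vol d M := by linarith
    exact le_of_mul_le_mul_right this (vol_pos d M)
  have hV := vol_pos d (L + (l + M))
  have h7 : (1 - ε / 4) * ((1 - ε / 4) * vol d (L + (l + M)))
      ≤ (1 + ε / 4) * (vol d (L + (l + M)) * (1 - ε)) :=
    (mul_le_mul_of_nonneg_left hL2.le (by linarith)).trans
      (step1.trans (mul_le_mul_of_nonneg_left h6 (by linarith)))
  have h8 : (1 - ε / 4) * (1 - ε / 4) ≤ (1 + ε / 4) * (1 - ε) := by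
    refine le_of_mul_le_mul_right ?_ hV
    linarith
  nlinarith

/-! ### Distribution of the local densities -/

/-- The sum over `z ∈ [-n, n]^d` of the densities of `A` in `z + [-N, N]^d` is at least the left side
by double counting, and at most the right side because a density `t ∈ [0, 1]` satisfies
`t ≤ 1/2 * 1[t > 1/2] + 1/2 * 1[t > δ] + δ`. -/
lemma card_slice_le_richPoints (d : ℕ) (A : Set (Fin d → ℤ)) (δ : ℝ) (hδ : 0 < δ)
    (N n : ℕ) (hn : N ≤ n) :
    ((slice d A (n - N) 0).card : ℝ)
      ≤ (1 / 2) * ((richPoints d A (1 / 2) N n).card : ℝ)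
        + (1 / 2) * ((richPoints d A δ N n).card : ℝ) + δ * vol d n := by
  classical
  have h1 := card_mul_vol_le_sum d A (n - N) N 0
  rw [Nat.sub_add_cancel hn] at h1
  have hV := vol_pos d N
  have h2 : ∑ z ∈ box d n 0, ((slice d A N z).card : ℝ)
      ≤ ∑ z ∈ box d n 0,
        (((1 / 2) * (if 1 / 2 * vol d N < ((slice d A N z).card : ℝ) then 1 else 0)
          + (1 / 2) * (if δ * vol d N < ((slice d A N z).card : ℝ) then 1 else 0) + δ)
          * vol d N) := by
    refine Finset.sum_le_sum fun z _ => ?_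
    have := card_slice_le d A N z
    have := mul_pos hδ hV
    split_ifs <;> linarith
  rw [← Finset.sum_mul, Finset.sum_add_distrib, Finset.sum_add_distrib, ← Finset.mul_sum,
    ← Finset.mul_sum, Finset.sum_const, nsmul_eq_mul, card_box] at h2
  have h3 := le_of_mul_le_mul_right (h1.trans h2) hV
  rw [Finset.sum_boole, Finset.sum_boole] at h3
  rw [richPoints, richPoints]
  linarith

/-- A single density level `ε`, depending on `S`, is exceeded by `A` near a proportion at least
`α - c` of all points for every `c > 0`, at arbitrarily large scales `N`. -/
lemma exists_level (d : ℕ) (A : Set (Fin d → ℤ)) (α : ℝ) (hA : lowerDensity d A = α)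
    (S : Set ℕ) (hS : S.Infinite) :
    ∃ ε : ℝ, 0 < ε ∧ ε < 1 ∧ ∀ c : ℝ, 0 < c → ∃ᶠ N : ℕ in atTop, ∃ᶠ n : ℕ in atTop ⊓ 𝓟 S,
      (α - c) * vol d n ≤ ((richPoints d A ε N n).card : ℝ) := by
  have : NeBot (atTop ⊓ 𝓟 S) := by
    rw [← frequently_mem_iff_neBot]
    exact Nat.frequently_atTop_iff_infinite.2 hS
  have hlow : ∀ c : ℝ, 0 < c → ∀ N : ℕ, ∀ᶠ n : ℕ in atTop,
      (α - c) * vol d n ≤ ((slice d A (n - N) 0).card : ℝ) := by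
    intro c hc N
    have hlim : liminf (fun n : ℕ => ((slice d A n 0).card : ℝ) / vol d n) atTop = α := by
      rw [← hA]
      simp only [lowerDensity, ncard_inter_cube, vol]
    have h1 : ∀ᶠ n : ℕ in atTop, α - c / 2 < ((slice d A n 0).card : ℝ) / vol d n :=
      eventually_lt_of_lt_liminf (by rw [hlim]; linarith)
        (isBoundedUnder_of ⟨0, fun n => div_nonneg (Nat.cast_nonneg _) (vol_pos d n).le⟩)
    have h2 := (tendsto_sub_atTop_nat N).eventually h1
    have h3 : Tendsto (fun n : ℕ => (α - c / 2) * (vol d (n - N) / vol d n)) atTop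
        (nhds ((α - c / 2) * 1)) := tendsto_const_nhds.mul (tendsto_vol_sub_ratio d N)
    filter_upwards [h2, h3.eventually_const_lt (show α - c < _ by linarith)] with n hn2 hn3
    rw [lt_div_iff₀ (vol_pos _ _)] at hn2
    rw [← mul_div_assoc, lt_div_iff₀ (vol_pos _ _)] at hn3
    linarith
  by_contra hcon
  push Not at hcon
  obtain ⟨c, hc, hcN⟩ := hcon (1 / 2) (by norm_num) (by norm_num)
  set δ := min (c / 4) (1 / 2) with hδ
  have hδ0 : 0 < δ := lt_min (by linarith) (by norm_num)
  have hδc : δ ≤ c / 4 := min_le_left _ _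
  have hδ1 : δ ≤ 1 / 2 := min_le_right _ _
  obtain ⟨c', hc', hcN'⟩ := hcon δ hδ0 (by linarith)
  obtain ⟨N, hN, hN'⟩ := (hcN.and hcN').exists
  have hl : ∀ᶠ n : ℕ in atTop ⊓ 𝓟 S, N ≤ n ∧
      (α - c / 4) * vol d n ≤ ((slice d A (n - N) 0).card : ℝ) :=
    ((eventually_ge_atTop N).and (hlow (c / 4) (by linarith) N)).filter_mono inf_le_left
  obtain ⟨n, ⟨⟨hn1, hn2⟩, hn3⟩, hn4⟩ := ((hl.and hN).and hN').exists
  have h := card_slice_le_richPoints d A δ hδ0 N n hn1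
  have hV := vol_pos d n
  have : δ * vol d n ≤ c / 4 * vol d n := mul_le_mul_of_nonneg_right hδc hV.le
  have : 0 < c' * vol d n := mul_pos hc' hV
  nlinarith

/-! ### Cubes inside the sumset -/

/-- Pigeonhole: for `w` within `k` of `z + x`, the reflection `a ↦ w - a` carries the points of `A`
near `z` into `x + [-(N + k), N + k]^d`, where all but a proportion `ε` of the points
belong to `C`. -/
lemma cubeAt_subset (d : ℕ) (A C : Set (Fin d → ℤ)) (ε : ℝ) (N k : ℕ) (x z : Fin d → ℤ)
    (hC : (1 - ε) * vol d (N + k) ≤ ((slice d C (N + k) x).card : ℝ))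
    (hz : ε * vol d (N + k) < ((slice d A N z).card : ℝ)) :
    cubeAt d k (z + x) ⊆ A + C := by
  classical
  intro w hw
  rw [mem_cubeAt, mem_box] at hw
  have hinj : Function.Injective (fun a : Fin d → ℤ => w - a) := sub_right_injective
  have hsub : (slice d A N z).image (fun a => w - a) ⊆ box d (N + k) x := by
    intro y hy
    obtain ⟨a, ha, rfl⟩ := Finset.mem_image.1 hy
    rw [mem_slice, mem_box] at ha
    rw [mem_box]
    intro i
    have h1 := ha.1 i
    have h2 := hw i
    simp only [Pi.add_apply, Pi.sub_apply] at h2 ⊢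
    push_cast
    constructor <;> linarith
  have hcard : (box d (N + k) x).card
      < ((slice d A N z).image (fun a => w - a)).card + (slice d C (N + k) x).card := by
    rw [Finset.card_image_of_injective _ hinj]
    have : ((box d (N + k) x).card : ℝ)
        < ((slice d A N z).card : ℝ) + ((slice d C (N + k) x).card : ℝ) := by
      rw [card_box]
      linarith
    exact_mod_cast this
  obtain ⟨y, hy⟩ := Finset.inter_nonempty_of_card_lt_card_add_card hsub
    (Finset.filter_subset _ _) hcard
  rw [Finset.mem_inter, Finset.mem_image] at hy
  obtain ⟨⟨a, ha, rfl⟩, hy⟩ := hy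
  exact Set.mem_add.2 ⟨a, (mem_slice.1 ha).2, w - a, (mem_slice.1 hy).2, by abel⟩

/-- Translation by a vector of size at most `r` moves only points of the boundary layer of width `r`
out of the cube `[-n, n]^d`. -/
lemma card_le_card_slice_of_shift (d : ℕ) (R : Finset (Fin d → ℤ)) (E : Set (Fin d → ℤ))
    (x : Fin d → ℤ) (r n : ℕ) (hx : ∀ i, |x i| ≤ r) (hr : r ≤ n) (hR : R ⊆ box d n 0)
    (hE : ∀ z ∈ R, z + x ∈ E) :
    (R.card : ℝ) ≤ ((slice d E n 0).card : ℝ) + (vol d n - vol d (n - r)) := by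
  classical
  have hbox : box d (n - r) 0 ⊆ box d n 0 := by
    intro y hy
    rw [mem_box] at hy ⊢
    intro i
    have := hy i
    simp only [Pi.zero_apply] at this ⊢
    omega
  have h1 : ((R ∩ box d (n - r) 0).card : ℝ) ≤ ((slice d E n 0).card : ℝ) := by
    rw [← Finset.card_image_of_injective (R ∩ box d (n - r) 0) (add_left_injective x)]
    refine Nat.cast_le.2 (Finset.card_le_card ?_)
    intro y hy
    obtain ⟨z, hz, rfl⟩ := Finset.mem_image.1 hy
    rw [Finset.mem_inter, mem_box] at hz
    refine mem_slice.2 ⟨mem_box.2 fun i => ?_, hE z hz.1⟩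
    have h1 := hz.2 i
    have h2 := abs_le.1 (hx i)
    simp only [Pi.zero_apply, Pi.add_apply] at h1 ⊢
    omega
  have h2 : ((R \ box d (n - r) 0).card : ℝ) ≤ vol d n - vol d (n - r) := by
    rw [← card_box d n 0, ← card_box d (n - r) 0, ← Nat.cast_sub (Finset.card_le_card hbox),
      ← Finset.card_sdiff_of_subset hbox]
    exact Nat.cast_le.2 (Finset.card_le_card (Finset.sdiff_subset_sdiff hR le_rfl))
  have h3 : (R.card : ℝ) = ((R ∩ box d (n - r) 0).card : ℝ) + ((R \ box d (n - r) 0).card : ℝ) := by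
    rw [← Nat.cast_add, Finset.card_inter_add_card_sdiff]
  linarith

theorem stmt_1 (d : ℕ) (hd : 1 ≤ d) (A B : Set (Fin d → ℤ)) (α : ℝ)
    (hA : lowerDensity d A = α) (hα : 0 < α) (hB : 0 < banachDensity d B) :
    ∀ S : Set ℕ, S.Infinite → ∃ m : ℕ, ∀ k : ℕ,
      α ≤ limsup (fun n : ℕ =>
        (Set.ncard (cube d n ∩ {z : Fin d → ℤ | cubeAt d k z ⊆ A + B + cube d m}) : ℝ)
          / (2 * (n : ℝ) + 1) ^ d) (atTop ⊓ 𝓟 S) := by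
  intro S hS
  obtain ⟨ε, hε, hε1, hlev⟩ := exists_level d A α hA S hS
  obtain ⟨m, hm⟩ := exists_dense_window d B hB (ε / 2) (by linarith) (by linarith)
  refine ⟨m, fun k => ?_⟩
  simp_rw [Set.inter_comm (cube d _), ncard_inter_cube]
  set E : Set (Fin d → ℤ) := {z | cubeAt d k z ⊆ A + B + cube d m} with hEdef
  refine le_of_forall_pos_sub_le fun c hc => ?_
  refine le_limsup_of_frequently_le ?_ (isBoundedUnder_of ⟨1, fun n =>
    (div_le_one (vol_pos d n)).2 (card_slice_le d E n 0)⟩)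
  -- `N` is large compared with `k`, so that `ε * vol d N` beats `ε / 2 * vol d (N + k)`.
  obtain ⟨N, hN, hNk⟩ := ((hlev (c / 2) (by linarith)).and_eventually
    ((tendsto_vol_ratio d k).eventually_const_lt (show (1 / 2 : ℝ) < 1 by norm_num))).exists
  rw [lt_div_iff₀ (vol_pos _ _)] at hNk
  obtain ⟨x, hx⟩ := hm (N + k)
  obtain ⟨r, hr⟩ : ∃ r : ℕ, ∀ i, |x i| ≤ r := by
    refine ⟨∑ i, (x i).natAbs, fun i => ?_⟩
    rw [Int.abs_eq_natAbs]
    exact_mod_cast Finset.single_le_sum (f := fun i => (x i).natAbs)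
      (fun _ _ => Nat.zero_le _) (Finset.mem_univ i)
  have hev : ∀ᶠ n : ℕ in atTop ⊓ 𝓟 S, r ≤ n ∧ 1 - c / 2 < vol d (n - r) / vol d n :=
    ((eventually_ge_atTop r).and ((tendsto_vol_sub_ratio d r).eventually_const_lt
      (by linarith))).filter_mono inf_le_left
  refine (hN.and_eventually hev).mono ?_
  rintro n ⟨h1, hrn, h2⟩
  rw [lt_div_iff₀ (vol_pos _ _)] at h2
  have h3 := card_le_card_slice_of_shift d (richPoints d A ε N n) E x r n hr hrn
    (Finset.filter_subset _ _) fun z hz => by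
      have hz' : ε * vol d N < ((slice d A N z).card : ℝ) := (Finset.mem_filter.1 hz).2
      rw [hEdef, Set.mem_ofPred_eq, add_assoc]
      refine cubeAt_subset d A (B + cube d m) (ε / 2) N k x z hx (lt_trans ?_ hz')
      nlinarith
  change α - c ≤ ((slice d E n 0).card : ℝ) / vol d n
  rw [le_div_iff₀ (vol_pos _ _)]
  linarith
end

section
/- Let A and B be subsets of ℕ such that the lower density of A equals α > 0 and the lower density of B equals β > 0. Then for every ε > 0 and every increasing function f : ℕ → ℕ, there exists m_f ∈ ℕ such that the lower density of the set {n ∈ ℕ : there exists m < m_f with [n − f(m), n + f(m)] ⊆ A + B + [-m,m]} is at least min{α + β − ε, 1}. -/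
/-!
Let `A_m` be the set of points within distance `m` of `A`, so that `A_m + B_m ⊆ A + B + [-2m, 2m]`.

If `α + β > 1`, then by the pigeonhole principle `A + B` contains every large integer
(`case_large`). Assume `α + β ≤ 1`.

*Choice of a scale.* Fix scales `m_0 < m_1 < ⋯` with `m_{i+1} = m_i + L_i` and
`L_i = 4 (f (2 m_i) + 1)`. The sets `A_{m_{i+1}} \ A_{m_i}` are pairwise disjoint, and so are the
corresponding sets for `B`. Hence, for each `N`, one of the first `K` scales satisfies
`|(A_{m+L} \ A_m) ∩ [1, 2N]| ≤ 4N / K`, and likewise for `B` (`exists_scale`).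

*Core points.* At this scale, call `x ∈ A_m` a core point if `A_{m+L} \ A_m` occupies less than a
quarter of `[x, x + L)`. As `[x, x + L) ⊆ A_{m+L}`, the set `A_m` then fills more than three
quarters of `[x, x + L)`, and another pigeonhole argument shows that for core points `x` of `A` and
`y` of `B` the whole interval of radius `f (2m)` about `x + y + L` lies in `A_m + B_m`
(`Icc_subset_of_core`). By double counting, only `O(N / K)` points of `A_m` in `[1, N]` are not
core points (`cnt_bad_le`). So it remains to bound from below the size of the sumset `P + Q` of the
two sets of core points.

*The sumset bound.* Both sets of core points have a density bound on long initial segments only.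
Starting the count of `P` at the minimum `x` of `k ↦ |P ∩ [1, k]| - c k` makes the bound valid on
all segments `(x, x + k]` and forces `x + 1 ∈ P` (`exists_base`); similarly for `Q` and a point `y`.
Mann's theorem, in the form due to Dyson (`dyson`), applies to `(P - x) ∪ {0}` and `(Q - y) ∪ {0}`.
Adjoining `0` creates sums which need not belong to `P + Q - x - y`; but `p - x` does belong to it
as soon as `p - 1 ∈ P`, because `p + y = (p - 1) + (y + 1)`, and `p ∈ P` with `p - 1 ∉ P` happens
only `O(N / K)` times (`cnt_core_edge`). The two estimates are combined in `cnt_sum_ge`.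
-/

open Filter

/-- Lower asymptotic density of a set of (positive) natural numbers,
computed on the initial segments `[1, n]`. -/
noncomputable def lowerDensityNat (A : Set ℕ) : ℝ :=
  liminf (fun n : ℕ => (Set.ncard (A ∩ Set.Icc 1 n) : ℝ) / n) atTop

/-- The set `A + B + [-m, m]`, viewed inside `ℤ`. -/
def sumsetPlusInterval (A B : Set ℕ) (m : ℕ) : Set ℤ :=
  {w : ℤ | ∃ a ∈ A, ∃ b ∈ B, ∃ t : ℤ, |t| ≤ (m : ℤ) ∧ w = (a : ℤ) + (b : ℤ) + t}

/-! ### Counting functions -/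

open Classical in
/-- The number of elements of `A` in `[1, n]`; the element `0` is not counted. -/
noncomputable def cnt (A : Set ℕ) (n : ℕ) : ℕ := (Finset.filter (· ∈ A) (Finset.Icc 1 n)).card

lemma cnt_eq_ncard (A : Set ℕ) (n : ℕ) : (A ∩ Set.Icc 1 n).ncard = cnt A n := by
  classical
  rw [cnt, ← Set.ncard_coe_finset]
  congr 1
  ext x
  simp only [Set.mem_inter_iff, Set.mem_Icc, Finset.coe_filter, Finset.mem_Icc, Set.mem_ofPred_eq]
  tauto

lemma cnt_zero (A : Set ℕ) : cnt A 0 = 0 := by simp [cnt]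

lemma cnt_le (A : Set ℕ) (n : ℕ) : cnt A n ≤ n := by
  classical
  simpa [cnt] using Finset.card_filter_le (Finset.Icc 1 n) (· ∈ A)

lemma cnt_eq_zero {A : Set ℕ} {n : ℕ} (h : ∀ x ∈ A, 1 ≤ x → x ≤ n → False) : cnt A n = 0 := by
  classical
  rw [cnt, Finset.card_eq_zero, Finset.filter_eq_empty_iff]
  intro x hx hxA
  simp only [Finset.mem_Icc] at hx
  exact h x hxA hx.1 hx.2

lemma cnt_mono {A B : Set ℕ} {n : ℕ} (h : ∀ x ∈ A, 1 ≤ x → x ≤ n → x ∈ B) :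
    cnt A n ≤ cnt B n := by
  classical
  apply Finset.card_le_card
  intro x
  simp only [Finset.mem_filter, Finset.mem_Icc]
  grind

lemma cnt_union_le {A B C : Set ℕ} {n : ℕ} (h : ∀ x ∈ A, 1 ≤ x → x ≤ n → x ∈ B ∨ x ∈ C) :
    cnt A n ≤ cnt B n + cnt C n := by
  classical
  refine le_trans (Finset.card_le_card ?_) (Finset.card_union_le _ _)
  intro x
  simp only [Finset.mem_filter, Finset.mem_Icc, Finset.mem_union]
  grind

lemma cnt_add_le {A B C : Set ℕ} {n : ℕ} (hA : ∀ x ∈ A, 1 ≤ x → x ≤ n → x ∈ C)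
    (hB : ∀ x ∈ B, 1 ≤ x → x ≤ n → x ∈ C) (h : ∀ x ∈ A, x ∈ B → 1 ≤ x → x ≤ n → False) :
    cnt A n + cnt B n ≤ cnt C n := by
  classical
  unfold cnt
  rw [← Finset.card_union_of_disjoint]
  · apply Finset.card_le_card
    intro x
    simp only [Finset.mem_filter, Finset.mem_Icc, Finset.mem_union]
    grind
  · rw [Finset.disjoint_left]
    intro x
    simp only [Finset.mem_filter, Finset.mem_Icc]
    grind

lemma cnt_le_shift {A B : Set ℕ} {n k t : ℕ}
    (h : ∀ x ∈ A, 1 ≤ x → x ≤ n → x + t ∈ B ∧ 1 ≤ x + t ∧ x + t ≤ k) :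
    cnt A n ≤ cnt B k := by
  classical
  apply Finset.card_le_card_of_injOn (· + t)
  · intro x
    simp only [Finset.coe_filter, Finset.mem_Icc, Set.mem_ofPred_eq]
    grind
  · intro x _ y _ hxy
    simpa using hxy

lemma cnt_of_le {A : Set ℕ} {k n : ℕ} (h : k ≤ n) : cnt {x | x ∈ A ∧ x ≤ k} n = cnt A k := by
  apply le_antisymm
  · exact cnt_le_shift (t := 0) (fun x hx h1 h2 => ⟨hx.1, h1, hx.2⟩)
  · exact cnt_le_shift (t := 0) (fun x hx h1 h2 => ⟨⟨hx, h2⟩, h1, h2.trans h⟩)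

lemma cnt_succ_of_mem {A : Set ℕ} {n : ℕ} (h : n + 1 ∈ A) : cnt A (n + 1) = cnt A n + 1 := by
  classical
  unfold cnt
  rw [← Finset.insert_Icc_right_eq_Icc_add_one (by omega), Finset.filter_insert, if_pos h,
    Finset.card_insert_of_notMem (by simp)]

lemma cnt_succ_of_notMem {A : Set ℕ} {n : ℕ} (h : n + 1 ∉ A) : cnt A (n + 1) = cnt A n := by
  classical
  unfold cnt
  rw [← Finset.insert_Icc_right_eq_Icc_add_one (by omega), Finset.filter_insert, if_neg h]

/-! ### Mann's theorem by Dyson's transform -/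

lemma cnt_shift_self {A : Set ℕ} {b m : ℕ} (hb : 1 ≤ b) (hbm : b ≤ m) (h0 : 0 ∈ A)
    (h : ∀ a ∈ A, a ≤ m - b → a + b ∈ A) :
    cnt A (b - 1) + 1 + cnt A (m - b) ≤ cnt A m := by
  have h1 : cnt A (b - 1) + 1 = cnt A b := by
    obtain ⟨c, rfl⟩ : ∃ c, b = c + 1 := ⟨b - 1, by omega⟩
    rw [cnt_succ_of_mem (by simpa using h 0 h0 (by omega))]
    simp
  have h2 : cnt A (m - b) ≤ cnt {x | x ∈ A ∧ b < x} m :=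
    cnt_le_shift (t := b) (fun x hx h1 h2 => ⟨⟨h x hx h2, by omega⟩, by omega, by omega⟩)
  have h3 : cnt {x | x ∈ A ∧ x ≤ b} m + cnt {x | x ∈ A ∧ b < x} m ≤ cnt A m :=
    cnt_add_le (fun x hx _ _ => hx.1) (fun x hx _ _ => hx.1)
      (fun x hx hx' _ _ => by have := hx.2; have := hx'.2; omega)
  rw [cnt_of_le hbm] at h3
  omega

/-- If `a + B ⊆ A` (inside `[0, n]`) for all `a ∈ A` below `a₀`, then below `a₀` the density bound
for the pair `(A, B)` is already satisfied by `A` alone: split `[1, r]` at the least positive element `b` of `B` and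
use that `b + (A ∩ [0, r - b]) ⊆ A`. -/
lemma cnt_ge_of_closed {γ : ℝ} (hγ : γ ≤ 1) {A B : Set ℕ} {n a₀ : ℕ}
    (hA : 0 ∈ A) (h : ∀ m ≤ n, γ * m ≤ cnt A m + cnt B m)
    (hcl : ∀ a ∈ A, a < a₀ → ∀ b ∈ B, a + b ≤ n → a + b ∈ A) (r : ℕ) (hr : r < a₀)
    (hrn : r ≤ n) : γ * r ≤ cnt A r := by
  classical
  induction r using Nat.strong_induction_on with
  | _ r ih =>
    by_cases hB : ∃ b, b ∈ B ∧ 1 ≤ b ∧ b ≤ r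
    · obtain ⟨hb, hb1, hbr⟩ := Nat.find_spec hB
      set b := Nat.find hB with hbdef
      have hmin : ∀ c, c < b → ¬ (c ∈ B ∧ 1 ≤ c ∧ c ≤ r) := fun c hc => Nat.find_min hB hc
      have h1 := cnt_shift_self (A := A) hb1 hbr hA
        (fun a ha har => hcl a ha (by omega) b hb (by omega))
      have h2 := ih (b - 1) (by omega) (by omega) (by omega)
      have h3 := ih (r - b) (by omega) (by omega) (by omega)
      have h4 : (cnt A (b - 1) : ℝ) + 1 + cnt A (r - b) ≤ cnt A r := by exact_mod_cast h1
      push_cast [hb1, hbr] at h2 h3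
      nlinarith
    · have : cnt B r = 0 := cnt_eq_zero fun x hx h1 h2 => hB ⟨x, hx, h1, h2⟩
      have := h r hrn
      simp_all

/-- **Dyson's form of Mann's theorem.** If `0 ∈ A ∩ B` and the counting functions of `A` and `B`
together grow at least like `γ m` for all `m ≤ n`, where `γ ≤ 1`, then `A + B` has at least `γ n`
elements in `[1, n]`. The proof is by induction on the number of elements of `B`: take the least
`a₀ ∈ A` with `a₀ + B ⊄ A`, and move the elements `b` with `a₀ + b ∉ A` from `B` to `A`, shifting
them by `a₀`. This keeps the hypotheses and does not enlarge the sumset. -/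
theorem dyson {γ : ℝ} (hγ : γ ≤ 1) (n : ℕ) (A B : Set ℕ) (hA : 0 ∈ A) (hB : 0 ∈ B)
    (h : ∀ m ≤ n, γ * m ≤ cnt A m + cnt B m) :
    γ * n ≤ cnt {c | ∃ a ∈ A, ∃ b ∈ B, c = a + b} n := by
  classical
  induction hk : cnt B n using Nat.strong_induction_on generalizing A B with
  | _ k ih =>
  subst hk
  by_cases hex : ∃ a, a ∈ A ∧ ∃ b ∈ B, a + b ≤ n ∧ a + b ∉ A
  · obtain ⟨ha, b₁, hb₁, hb₁n, hb₁A⟩ := Nat.find_spec hex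
    set a₀ := Nat.find hex with ha₀
    have hcl : ∀ a ∈ A, a < a₀ → ∀ b ∈ B, a + b ≤ n → a + b ∈ A := by
      intro a haA hlt b hb hab
      by_contra hc
      exact Nat.find_min hex hlt ⟨haA, b, hb, hab, hc⟩
    clear_value a₀
    -- the elements of `B` to be moved; everything happens inside `[0, n]`
    set E : Set ℕ := {b | b ∈ B ∧ a₀ + b ≤ n ∧ a₀ + b ∉ A} with hE
    set A₁ : Set ℕ := {x | x ∈ A ∨ ∃ b ∈ E, x = b + a₀} with hA₁
    set B₁ : Set ℕ := {x | x ∈ B ∧ x ∉ E} with hB₁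
    have hE0 : ∀ b ∈ E, 1 ≤ b := by
      rintro b ⟨_, _, h3⟩
      rcases Nat.eq_zero_or_pos b with rfl | hb
      · exact absurd ha h3
      · exact hb
    have hlt : cnt B₁ n < cnt B n := by
      have h1 : cnt B₁ n + cnt E n ≤ cnt B n :=
        cnt_add_le (fun x hx _ _ => hx.1) (fun x hx _ _ => hx.1) (fun x hx hx' _ _ => hx.2 hx')
      have h2 : 0 < cnt E n := by
        rw [cnt, Finset.card_pos]
        have hb₁E : b₁ ∈ E := ⟨hb₁, hb₁n, hb₁A⟩
        exact ⟨b₁, by simpa [hb₁E] using ⟨hE0 _ hb₁E, by omega⟩⟩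
      omega
    have hsub : cnt {c | ∃ a ∈ A₁, ∃ b ∈ B₁, c = a + b} n ≤
        cnt {c | ∃ a ∈ A, ∃ b ∈ B, c = a + b} n := by
      apply cnt_mono
      rintro x ⟨a, haA, b, ⟨hbB, hbE⟩, rfl⟩ _ hn
      rcases haA with haA | ⟨e, he, rfl⟩
      · exact ⟨a, haA, b, hbB, rfl⟩
      · refine ⟨a₀ + b, ?_, e, he.1, by ring⟩
        by_contra hc
        exact hbE ⟨hbB, by omega, hc⟩
    refine le_trans (ih _ hlt A₁ B₁ (Or.inl hA) ⟨hB, fun h0 => by simpa using hE0 0 h0⟩ ?_ rfl)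
      (by exact_mod_cast hsub)
    intro m hm
    -- the moved elements which are lost from the count up to `m`
    set E₂ : Set ℕ := {b | b ∈ E ∧ m < b + a₀}
    have e1 : cnt B m ≤ cnt B₁ m + cnt E m := cnt_union_le (fun x hx _ _ => by
      by_cases hxE : x ∈ E
      · exact Or.inr hxE
      · exact Or.inl ⟨hx, hxE⟩)
    have e2 : cnt E m ≤ cnt E₂ m + cnt {b | b ∈ E ∧ b + a₀ ≤ m} m :=
      cnt_union_le (fun x hx _ _ => by
        rcases lt_or_ge m (x + a₀) with h1 | h1
        · exact Or.inl ⟨hx, h1⟩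
        · exact Or.inr ⟨hx, h1⟩)
    have e3 : cnt {b | b ∈ E ∧ b + a₀ ≤ m} m ≤ cnt {x | x ∈ A₁ ∧ x ∉ A} m :=
      cnt_le_shift (t := a₀) (fun x hx h1 h2 =>
        ⟨⟨Or.inr ⟨x, hx.1, rfl⟩, by rw [add_comm]; exact hx.1.2.2⟩, by omega, hx.2⟩)
    have e4 : cnt A m + cnt {x | x ∈ A₁ ∧ x ∉ A} m ≤ cnt A₁ m :=
      cnt_add_le (fun x hx _ _ => Or.inl hx) (fun x hx _ _ => hx.1) (fun x hx hx' _ _ => hx'.2 hx)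
    by_cases hE₂ : ∃ b, b ∈ E₂ ∧ b ≤ m
    · obtain ⟨b, ⟨hb, hbm⟩, hmin⟩ : ∃ b, (b ∈ E₂ ∧ b ≤ m) ∧ ∀ c, c < b → ¬ (c ∈ E₂ ∧ c ≤ m) :=
        ⟨Nat.find hE₂, Nat.find_spec hE₂, fun c hc => Nat.find_min hE₂ hc⟩
      have hb1 := hE0 b hb.1
      have hlt : m < b + a₀ := hb.2
      have e5 : cnt {x | x ∈ B ∧ x ≤ b - 1} m + cnt E₂ m ≤ cnt B m :=
        cnt_add_le (fun x hx _ _ => hx.1) (fun x hx _ _ => hx.1.1)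
          (fun x hx hx' h1 h2 => hmin x (by have := hx.2; omega) ⟨hx', h2⟩)
      rw [cnt_of_le (by omega)] at e5
      -- the loss is at most `|B ∩ [b, m]|`, and `b + (A ∩ [0, m - b]) ⊆ A` compensates for it
      have e6 := cnt_shift_self (A := A) hb1 hbm hA
        (fun a ha har => hcl a ha (by omega) b hb.1.1 (by omega))
      have e7 := cnt_ge_of_closed hγ hA h hcl (m - b) (by omega) (by omega)
      have e8 := h (b - 1) (by omega)
      have e9 : ((cnt A (b - 1) : ℝ) + cnt B (b - 1)) + 1 + cnt A (m - b)
          ≤ cnt A₁ m + cnt B₁ m := by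
        have : (cnt A (b - 1) + cnt B (b - 1)) + 1 + cnt A (m - b) ≤ cnt A₁ m + cnt B₁ m := by
          omega
        exact_mod_cast this
      push_cast [hb1, hbm] at e7 e8
      nlinarith
    · have e5 : cnt E₂ m = 0 :=
        cnt_eq_zero fun x hx _ h2 => hE₂ ⟨x, hx, h2⟩
      have e6 : (cnt A m : ℝ) + cnt B m ≤ cnt A₁ m + cnt B₁ m := by
        have : cnt A m + cnt B m ≤ cnt A₁ m + cnt B₁ m := by omega
        exact_mod_cast this
      exact (h m hm).trans e6
  · push Not at hex
    have h1 := cnt_ge_of_closed (a₀ := n + 1) hγ hA h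
      (fun a ha _ b hb hab => hex a ha b hb hab) n (by omega) le_rfl
    refine h1.trans ?_
    have : cnt A n ≤ cnt {c | ∃ a ∈ A, ∃ b ∈ B, c = a + b} n :=
      cnt_mono (fun x hx _ _ => ⟨x, hx, 0, hB, rfl⟩)
    exact_mod_cast this

lemma cnt_mono_right (A : Set ℕ) {k n : ℕ} (h : k ≤ n) : cnt A k ≤ cnt A n :=
  cnt_le_shift (t := 0) (fun _ hx h1 h2 => ⟨hx, h1, h2.trans h⟩)

/-! ### Core points -/

/-- The natural numbers at distance at most `m` from `A`. -/
def thick (A : Set ℕ) (m : ℕ) : Set ℕ := {n | ∃ a ∈ A, a ≤ n + m ∧ n ≤ a + m}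

/-- The points at distance at most `m + L`, but more than `m`, from `A`. -/
def halo (A : Set ℕ) (m L : ℕ) : Set ℕ := {n | n ∈ thick A (m + L) ∧ n ∉ thick A m}

open Classical in
/-- The points `x` at distance at most `m` from `A` such that fewer than `q` of the `4 q` points of
`[x, x + 4 q)` are at distance more than `m` from `A`. (All of them are within `m + 4 q`.) -/
def core (A : Set ℕ) (m q : ℕ) : Set ℕ :=
  {x | x ∈ thick A m ∧
    (Finset.filter (· ∈ halo A m (4 * q)) (Finset.Ico x (x + 4 * q))).card < q}

lemma subset_thick (A : Set ℕ) (m : ℕ) : A ⊆ thick A m :=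
  fun a ha => ⟨a, ha, by omega, by omega⟩

lemma thick_shift {A : Set ℕ} {m L x z : ℕ} (hx : x ∈ thick A m) (h1 : x ≤ z + L)
    (h2 : z ≤ x + L) : z ∈ thick A (m + L) := by
  obtain ⟨a, ha, h3, h4⟩ := hx
  exact ⟨a, ha, by omega, by omega⟩

/-- Pigeonhole over the decompositions `z = u + v`, where `u` runs through the middle part
`[x + f + 1, x + L - f)` of `[x, x + L)`, with `L = 4 (f + 1)`. Then `v` lies in `[y, y + L)`; there
are at least `L / 2` such `u`, and fewer than `L / 4` fail because of `u`, and fewer than `L / 4`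
because of `v`. -/
lemma exists_thick_of_core {A B : Set ℕ} {m f x y z : ℕ}
    (hx : x ∈ core A m (f + 1)) (hy : y ∈ core B m (f + 1))
    (h1 : x + y + 4 * (f + 1) ≤ z + f) (h2 : z ≤ x + y + 4 * (f + 1) + f) :
    ∃ u ∈ thick A m, ∃ v ∈ thick B m, z = u + v := by
  classical
  obtain ⟨hxA, hxc⟩ := hx
  obtain ⟨hyB, hyc⟩ := hy
  set q := f + 1 with hq
  by_contra! hno
  set I := Finset.Ico (x + f + 1) (x + 4 * q - f) with hI
  set DA := Finset.filter (· ∈ halo A m (4 * q)) (Finset.Ico x (x + 4 * q))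
  set DB := Finset.filter (· ∈ halo B m (4 * q)) (Finset.Ico y (y + 4 * q))
  have hsub : I ⊆ DA ∪ DB.image (fun v => z - v) := by
    intro u hu
    rw [hI, Finset.mem_Ico] at hu
    rw [Finset.mem_union]
    by_cases hu' : u ∈ thick A m
    · right
      rw [Finset.mem_image]
      refine ⟨z - u, ?_, by omega⟩
      refine Finset.mem_filter.2 ⟨Finset.mem_Ico.2 ⟨by omega, by omega⟩,
        thick_shift hyB (by omega) (by omega), fun hv => hno u hu' _ hv (by omega)⟩
    · left
      exact Finset.mem_filter.2 ⟨Finset.mem_Ico.2 ⟨by omega, by omega⟩,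
        thick_shift hxA (by omega) (by omega), hu'⟩
  have h3 := Finset.card_le_card hsub
  have h4 := Finset.card_union_le DA (DB.image (fun v => z - v))
  have h5 : (DB.image (fun v => z - v)).card ≤ DB.card := Finset.card_image_le
  have h6 : I.card = (x + 4 * q - f) - (x + f + 1) := by rw [hI, Nat.card_Ico]
  omega

lemma Icc_subset_of_core {A B : Set ℕ} {m f x y : ℕ}
    (hx : x ∈ core A m (f + 1)) (hy : y ∈ core B m (f + 1)) :
    Set.Icc (((x + y + 4 * (f + 1) : ℕ) : ℤ) - f) (((x + y + 4 * (f + 1) : ℕ) : ℤ) + f) ⊆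
      sumsetPlusInterval A B (2 * m) := by
  rintro w ⟨hw1, hw2⟩
  lift w to ℕ using (by push_cast at hw1; omega) with z
  obtain ⟨u, ⟨a, ha, ha1, ha2⟩, v, ⟨b, hb, hb1, hb2⟩, rfl⟩ :=
    exists_thick_of_core hx hy (z := z) (by omega) (by omega)
  refine ⟨a, ha, b, hb, (u : ℤ) + v - a - b, ?_, by push_cast; ring⟩
  rw [abs_le]
  push_cast
  constructor <;> omega

/-- Few points near `A` are not core points. Count the pairs `(x, d)` with `x` such a point and `d`
in the halo with `x ≤ d < x + 4 q`: each `x` has at least `q` partners, each `d` at most `4 q`. -/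
lemma cnt_bad_le (A : Set ℕ) (m N : ℕ) {q : ℕ} (hq : 0 < q) :
    cnt {x | x ∈ thick A m ∧ x ∉ core A m q} N ≤ 4 * cnt (halo A m (4 * q)) (N + 4 * q) := by
  classical
  have key := Finset.card_mul_le_card_mul (m := q) (n := 4 * q)
    (s := Finset.filter (· ∈ {x | x ∈ thick A m ∧ x ∉ core A m q}) (Finset.Icc 1 N))
    (t := Finset.filter (· ∈ halo A m (4 * q)) (Finset.Icc 1 (N + 4 * q)))
    (fun x d => x ≤ d ∧ d < x + 4 * q) ?_ ?_
  · unfold cnt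
    convert Nat.le_of_mul_le_mul_right (key.trans_eq (by ring :
      _ = (4 * (Finset.filter (· ∈ halo A m (4 * q)) (Finset.Icc 1 (N + 4 * q))).card) * q)) hq
  · intro x hx
    obtain ⟨hx1, hx2, hx3⟩ := Finset.mem_filter.1 hx
    rw [Finset.mem_Icc] at hx1
    by_contra! hlt
    refine hx3 ⟨hx2, lt_of_le_of_lt (Finset.card_le_card ?_) hlt⟩
    intro d hd
    simp only [Finset.mem_filter, Finset.mem_Ico] at hd
    simp only [Finset.mem_bipartiteAbove, Finset.mem_filter, Finset.mem_Icc]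
    exact ⟨⟨⟨by omega, by omega⟩, hd.2⟩, hd.1⟩
  · intro d _
    have : Finset.bipartiteBelow (fun x d => x ≤ d ∧ d < x + 4 * q)
        (Finset.filter (· ∈ {x | x ∈ thick A m ∧ x ∉ core A m q}) (Finset.Icc 1 N)) d ⊆
        Finset.Ioc (d - 4 * q) d := by
      intro x hx
      simp only [Finset.mem_bipartiteBelow, Finset.mem_filter, Finset.mem_Icc] at hx
      rw [Finset.mem_Ioc]
      omega
    refine (Finset.card_le_card this).trans ?_
    rw [Nat.card_Ioc]
    omega

lemma cnt_core_ge (A : Set ℕ) (m : ℕ) {k N q : ℕ} (hq : 0 < q) (hk : k ≤ N) :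
    cnt A k ≤ cnt (core A m q) k + 4 * cnt (halo A m (4 * q)) (N + 4 * q) := by
  have h1 := cnt_bad_le A m k hq
  have h2 := cnt_mono_right (halo A m (4 * q)) (show k + 4 * q ≤ N + 4 * q by omega)
  have h3 : cnt A k ≤ cnt (core A m q) k + cnt {x | x ∈ thick A m ∧ x ∉ core A m q} k :=
    cnt_union_le fun x hx _ _ => by
      by_cases hc : x ∈ core A m q
      · exact Or.inl hc
      · exact Or.inr ⟨subset_thick A m hx, hc⟩
  omega

/-- Few core points have a predecessor which is not a core point. -/
lemma cnt_core_edge (A : Set ℕ) (m N : ℕ) {q : ℕ} (hq : 0 < q) :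
    cnt {p | p ∈ core A m q ∧ p - 1 ∉ core A m q} N ≤
      5 * cnt (halo A m (4 * q)) (N + 4 * q) + 1 := by
  have h1 := cnt_bad_le A m N hq
  have h2 := cnt_mono_right (halo A m (4 * q)) (show N ≤ N + 4 * q by omega)
  -- shift the left endpoints by one; the only positive integer lost is `1`
  have h3 : cnt {p | p ∈ core A m q ∧ p - 1 ∉ core A m q} N ≤
      cnt {p | p ≠ 1 ∧ p ∈ core A m q ∧ p - 1 ∉ core A m q} N + cnt {1} N :=
    cnt_union_le fun x hx _ _ => by
      by_cases hc : x = 1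
      · exact Or.inr hc
      · exact Or.inl ⟨hc, hx⟩
  have h4 : cnt {1} N ≤ 1 := by
    refine le_trans (cnt_le_shift (B := {1}) (k := 1) (t := 0) ?_) (cnt_le _ _)
    rintro x rfl _ _
    simp
  have h5 : cnt {p | p ≠ 1 ∧ p ∈ core A m q ∧ p - 1 ∉ core A m q} N ≤
      cnt {p | p ∈ thick A (m + 4 * q) ∧ p ∉ core A m q} N := by
    classical
    apply Finset.card_le_card_of_injOn (fun p => p - 1)
    · intro p hp
      simp only [Finset.coe_filter, Finset.mem_Icc, Set.mem_ofPred_eq] at hp ⊢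
      obtain ⟨⟨hp1, hp2⟩, hp3, hp4, hp5⟩ := hp
      exact ⟨⟨by omega, by omega⟩, thick_shift hp4.1 (by omega) (by omega), hp5⟩
    · intro p hp p' hp' h
      simp only [Finset.coe_filter, Finset.mem_Icc, Set.mem_ofPred_eq] at hp hp' h
      omega
  have h6 : cnt {p | p ∈ thick A (m + 4 * q) ∧ p ∉ core A m q} N ≤
      cnt (halo A m (4 * q)) N + cnt {x | x ∈ thick A m ∧ x ∉ core A m q} N :=
    cnt_union_le fun x hx _ _ => by
      by_cases hc : x ∈ thick A m
      · exact Or.inr ⟨hc, hx.2⟩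
      · exact Or.inl ⟨hx.1, hc⟩
  omega

/-! ### Sumsets of sets with few left endpoints -/

/-- A density bound for `P` with an additive error `e` holds without error, and with a slightly
smaller constant `c`, when counting starts at a suitable `x`, namely a minimum of
`k ↦ |P ∩ [1, k]| - c k` on `[0, N]`. -/
lemma exists_base {P : Set ℕ} {N : ℕ} {c s e : ℝ} (hc : 0 < c) (hs : 0 < s)
    (he : e < s * N) (h : ∀ k ≤ N, (c + s) * k - e ≤ cnt P k) :
    ∃ x, x < N ∧ s * x ≤ e ∧ x + 1 ∈ P ∧
      ∀ k, x + k ≤ N → c * k + cnt P x ≤ cnt P (x + k) := by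
  obtain ⟨x, hx, hmin⟩ := Finset.exists_min_image (Finset.range (N + 1))
    (fun k : ℕ => (cnt P k : ℝ) - c * k) ⟨0, by simp⟩
  simp only [Finset.mem_range] at hx hmin
  have hxe : s * x ≤ e := by
    have h0 := hmin 0 (by omega)
    have h1 := h x (by omega)
    rw [cnt_zero] at h0
    simp only [Nat.cast_zero] at h0
    nlinarith
  have hxN : x < N := by
    have : s * (x : ℝ) < s * N := by linarith
    exact_mod_cast lt_of_mul_lt_mul_left this hs.le
  refine ⟨x, hxN, hxe, ?_, ?_⟩
  · by_contra hP
    have h1 := hmin (x + 1) (by omega)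
    rw [cnt_succ_of_notMem hP] at h1
    push_cast at h1
    linarith
  · intro k hk
    have h1 := hmin (x + k) (by omega)
    push_cast at h1
    linarith

lemma cnt_translate (P : Set ℕ) (x k : ℕ) :
    cnt P (x + k) ≤ cnt P x + cnt {a | a = 0 ∨ x + a ∈ P} k := by
  classical
  induction k with
  | zero => simp
  | succ k ih =>
    by_cases h : x + k + 1 ∈ P
    · rw [← add_assoc, cnt_succ_of_mem h, cnt_succ_of_mem (Or.inr (by rwa [← add_assoc]))]
      omega
    · rw [← add_assoc, cnt_succ_of_notMem h, cnt_succ_of_notMem]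
      · exact ih
      · rintro (h' | h')
        · omega
        · exact h (by rwa [add_assoc])

/-- Mann's theorem for `P` and `Q` counted from the base points `x` and `y`, up to the number of
elements of `P` and `Q` whose predecessor is missing. -/
lemma cnt_sum_ge {P Q : Set ℕ} {x y n : ℕ} {c d : ℝ} (hcd : c + d ≤ 1)
    (hx : x + 1 ∈ P) (hy : y + 1 ∈ Q)
    (hP : ∀ k ≤ n, c * k + cnt P x ≤ cnt P (x + k))
    (hQ : ∀ k ≤ n, d * k + cnt Q y ≤ cnt Q (y + k)) :
    (c + d) * n ≤ cnt {w | ∃ p ∈ P, ∃ q ∈ Q, x + y + w = p + q} n +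
      cnt {p | p ∈ P ∧ p - 1 ∉ P} (x + n) + cnt {q | q ∈ Q ∧ q - 1 ∉ Q} (y + n) := by
  have h := dyson hcd n {a | a = 0 ∨ x + a ∈ P} {b | b = 0 ∨ y + b ∈ Q} (Or.inl rfl) (Or.inl rfl)
    (fun m hm => by
      have h1 := hP m hm
      have h2 := hQ m hm
      have h3 : (cnt P (x + m) : ℝ) ≤ cnt P x + cnt {a | a = 0 ∨ x + a ∈ P} m := by
        exact_mod_cast cnt_translate P x m
      have h4 : (cnt Q (y + m) : ℝ) ≤ cnt Q y + cnt {a | a = 0 ∨ y + a ∈ Q} m := by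
        exact_mod_cast cnt_translate Q y m
      linarith)
  refine h.trans ?_
  set W := {w | ∃ p ∈ P, ∃ q ∈ Q, x + y + w = p + q}
  set FP : Set ℕ := {w | x + w ∈ P ∧ x + w - 1 ∉ P}
  set FQ : Set ℕ := {w | y + w ∈ Q ∧ y + w - 1 ∉ Q}
  have h1 : cnt {c | ∃ a ∈ {a | a = 0 ∨ x + a ∈ P}, ∃ b ∈ {b | b = 0 ∨ y + b ∈ Q}, c = a + b} n
      ≤ cnt {w | w ∈ W ∨ w ∈ FP} n + cnt FQ n := by
    apply cnt_union_le
    -- sums involving one of the adjoined zeros are rewritten as `p + y = (p - 1) + (y + 1)`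
    rintro w ⟨a, ha, b, hb, rfl⟩ hw1 _
    rcases ha with rfl | ha
    · rcases hb with rfl | hb
      · omega
      · rw [zero_add] at hw1 ⊢
        by_cases hb' : y + b - 1 ∈ Q
        · exact Or.inl (Or.inl ⟨x + 1, hx, _, hb', by omega⟩)
        · exact Or.inr ⟨hb, hb'⟩
    · rcases hb with rfl | hb
      · rw [add_zero] at hw1 ⊢
        by_cases ha' : x + a - 1 ∈ P
        · exact Or.inl (Or.inl ⟨_, ha', y + 1, hy, by omega⟩)
        · exact Or.inl (Or.inr ⟨ha, ha'⟩)
      · exact Or.inl (Or.inl ⟨_, ha, _, hb, by omega⟩)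
  have h2 : cnt {w | w ∈ W ∨ w ∈ FP} n ≤ cnt W n + cnt FP n := cnt_union_le fun _ hw _ _ => hw
  have h3 : cnt FP n ≤ cnt {p | p ∈ P ∧ p - 1 ∉ P} (x + n) :=
    cnt_le_shift (t := x) fun w hw _ _ => ⟨by rw [add_comm]; exact hw, by omega, by omega⟩
  have h4 : cnt FQ n ≤ cnt {p | p ∈ Q ∧ p - 1 ∉ Q} (y + n) :=
    cnt_le_shift (t := y) fun w hw _ _ => ⟨by rw [add_comm]; exact hw, by omega, by omega⟩
  exact_mod_cast (show _ ≤ _ by omega)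

/-! ### Choice of a scale -/

/-- The scales `m_0 = 0` and `m_{i+1} = m_i + 4 (f (2 m_i) + 1)`. -/
def scale (f : ℕ → ℕ) : ℕ → ℕ
  | 0 => 0
  | i + 1 => scale f i + 4 * (f (2 * scale f i) + 1)

lemma scale_mono (f : ℕ → ℕ) : Monotone (scale f) :=
  monotone_nat_of_le_succ fun i => by simp [scale]

/-- The halos of `A` at successive scales are pairwise disjoint. -/
lemma sum_halo_le (A : Set ℕ) (f : ℕ → ℕ) (R K : ℕ) :
    ∑ i ∈ Finset.range K, cnt (halo A (scale f i) (4 * (f (2 * scale f i) + 1))) R ≤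
      cnt (thick A (scale f K)) R := by
  induction K with
  | zero => simp
  | succ K ih =>
    rw [Finset.sum_range_succ]
    refine (Nat.add_le_add_right ih _).trans (cnt_add_le ?_ ?_ ?_)
    · intro x hx _ _
      exact thick_shift hx (by omega) (by omega)
    · intro x hx _ _
      exact hx.1
    · intro x hx hx' _ _
      exact hx'.2 hx

lemma exists_scale (A B : Set ℕ) (f : ℕ → ℕ) (R : ℕ) {K : ℕ} (hK : 0 < K) :
    ∃ i < K, K * (cnt (halo A (scale f i) (4 * (f (2 * scale f i) + 1))) R +
      cnt (halo B (scale f i) (4 * (f (2 * scale f i) + 1))) R) ≤ 2 * R := by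
  by_contra! h
  have h1 := sum_halo_le A f R K
  have h2 := sum_halo_le B f R K
  have h3 := cnt_le (thick A (scale f K)) R
  have h4 := cnt_le (thick B (scale f K)) R
  have h5 := Finset.sum_lt_sum_of_nonempty (s := Finset.range K) ⟨0, by simpa using hK⟩
    (fun i hi => h i (Finset.mem_range.1 hi))
  rw [Finset.sum_const, ← Finset.mul_sum, Finset.sum_add_distrib, Finset.card_range,
    smul_eq_mul] at h5
  have := Nat.lt_of_mul_lt_mul_left h5
  omega

/-! ### Lower density in terms of the counting function -/

lemma ratio_bounds (A : Set ℕ) (n : ℕ) :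
    0 ≤ ((A ∩ Set.Icc 1 n).ncard : ℝ) / n ∧ ((A ∩ Set.Icc 1 n).ncard : ℝ) / n ≤ 1 := by
  refine ⟨by positivity, div_le_one_of_le₀ ?_ (by positivity)⟩
  rw [cnt_eq_ncard]
  exact_mod_cast cnt_le A n

lemma le_lowerDensityNat {A : Set ℕ} {γ : ℝ}
    (h : ∀ c < γ, ∀ᶠ N : ℕ in atTop, c * N ≤ cnt A N) : γ ≤ lowerDensityNat A := by
  refine le_of_forall_lt_imp_le_of_dense fun c hc => ?_
  refine le_liminf_of_le ?_ ?_
  · exact (isBoundedUnder_of ⟨1, fun n => (ratio_bounds A n).2⟩).isCoboundedUnder_ge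
  · filter_upwards [h c hc, eventually_gt_atTop 0] with N hN hpos
    rw [cnt_eq_ncard, le_div_iff₀ (by exact_mod_cast hpos)]
    exact hN

lemma eventually_cnt_ge {A : Set ℕ} {c : ℝ} (h : c < lowerDensityNat A) :
    ∀ᶠ N : ℕ in atTop, c * N ≤ cnt A N := by
  have h1 := eventually_lt_of_lt_liminf h
    (isBoundedUnder_of ⟨0, fun n => (ratio_bounds A n).1⟩)
  filter_upwards [h1, eventually_gt_atTop 0] with N hN hpos
  rw [cnt_eq_ncard, lt_div_iff₀ (by exact_mod_cast hpos)] at hN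
  exact hN.le

lemma exists_cnt_ge {A : Set ℕ} {c : ℝ} (hc : c ≤ 1) (h : c < lowerDensityNat A) :
    ∃ k₀ : ℕ, ∀ k : ℕ, c * k - k₀ ≤ cnt A k := by
  obtain ⟨k₀, hk₀⟩ := eventually_atTop.1 (eventually_cnt_ge h)
  refine ⟨k₀, fun k => ?_⟩
  rcases le_total k₀ k with h1 | h1
  · have := hk₀ k h1
    have : (0 : ℝ) ≤ k₀ := by positivity
    linarith
  · have h2 : (k : ℝ) ≤ k₀ := by exact_mod_cast h1
    have : c * (k : ℝ) ≤ k := mul_le_of_le_one_left (by positivity) hc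
    have : (0 : ℝ) ≤ cnt A k := by positivity
    linarith

/-! ### Assembling the proof -/

/-- If the densities add up to more than `1`, then `A + B` is cofinite. -/
lemma case_large {A B : Set ℕ} (h : 1 < lowerDensityNat A + lowerDensityNat B) (f : ℕ → ℕ) :
    1 ≤ lowerDensityNat {n : ℕ | ∃ m < 1,
        Set.Icc ((n : ℤ) - f m) ((n : ℤ) + f m) ⊆ sumsetPlusInterval A B m} := by
  classical
  set α := lowerDensityNat A
  set β := lowerDensityNat B
  obtain ⟨n₀, hn₀⟩ : ∃ n₀ : ℕ, ∀ z : ℕ, n₀ ≤ z → ∃ a ∈ A, ∃ b ∈ B, z = a + b := by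
    have hS : ∃ c d : ℝ, c < α ∧ d < β ∧ 1 < c + d :=
      ⟨α - (α + β - 1) / 3, β - (α + β - 1) / 3, by linarith, by linarith, by linarith⟩
    obtain ⟨c, d, hc, hd, hcd⟩ := hS
    obtain ⟨n₀, hn₀⟩ := eventually_atTop.1 ((eventually_cnt_ge hc).and (eventually_cnt_ge hd))
    refine ⟨n₀ + 2, fun z hz => ?_⟩
    obtain ⟨w, rfl⟩ : ∃ w, z = w + 1 := ⟨z - 1, by omega⟩
    obtain ⟨h1, h2⟩ := hn₀ w (by omega)
    have hlt : w < cnt A w + cnt B w := by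
      have hw : (0 : ℝ) < w := by exact_mod_cast (by omega : 0 < w)
      have : (w : ℝ) < cnt A w + cnt B w := by nlinarith
      exact_mod_cast this
    by_contra! hno
    -- if `w + 1` is not a sum, then `b ↦ w + 1 - b` maps `B ∩ [1, w]` into the complement of `A`
    have h3 : cnt B w ≤ cnt {x | x ∉ A} w := by
      apply Finset.card_le_card_of_injOn (fun b => w + 1 - b)
      · intro b hb
        simp only [Finset.coe_filter, Finset.mem_Icc, Set.mem_ofPred_eq] at hb ⊢
        exact ⟨⟨by omega, by omega⟩, fun ha => hno _ ha b hb.2 (by omega)⟩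
      · intro b hb b' hb' h
        simp only [Finset.coe_filter, Finset.mem_Icc, Set.mem_ofPred_eq] at hb hb' h
        omega
    have h4 : cnt A w + cnt {x | x ∉ A} w ≤ cnt Set.univ w :=
      cnt_add_le (fun _ _ _ _ => trivial) (fun _ _ _ _ => trivial) (fun _ h h' _ _ => h' h)
    have h5 := cnt_le Set.univ w
    omega
  refine le_lowerDensityNat fun c hc => ?_
  set G : Set ℕ := {n : ℕ | ∃ m < 1,
        Set.Icc ((n : ℤ) - f m) ((n : ℤ) + f m) ⊆ sumsetPlusInterval A B m}
  have hG : ∀ n, n₀ + f 0 ≤ n → n ∈ G := by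
    intro n hn
    refine ⟨0, by omega, ?_⟩
    rintro w ⟨hw1, hw2⟩
    lift w to ℕ using (by omega) with z
    obtain ⟨a, ha, b, hb, rfl⟩ := hn₀ z (by omega)
    exact ⟨a, ha, b, hb, 0, by simp, by push_cast; ring⟩
  obtain ⟨N₁, hN₁⟩ := exists_nat_gt ((n₀ + f 0 : ℕ) / (1 - c) : ℝ)
  filter_upwards [eventually_ge_atTop N₁, eventually_ge_atTop (n₀ + f 0)] with N hN hN'
  have h1 : cnt Set.univ (N - (n₀ + f 0)) ≤ cnt G N :=
    cnt_le_shift (t := n₀ + f 0) fun x _ _ _ => ⟨hG _ (by omega), by omega, by omega⟩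
  have h2 : cnt Set.univ (N - (n₀ + f 0)) = N - (n₀ + f 0) := by simp [cnt]
  have h3 : (N : ℝ) - (n₀ + f 0 : ℕ) ≤ cnt G N := by
    rw [← Nat.cast_sub hN']
    exact_mod_cast h2 ▸ h1
  have h4 : (N₁ : ℝ) ≤ N := by exact_mod_cast hN
  rw [div_lt_iff₀ (by linarith)] at hN₁
  nlinarith

/-- The density estimate on `[1, N]` at a scale `m` for which both halos are small, with error terms
measured by `s`; the radius `f` is here a fixed number. -/
lemma cnt_good_ge {A B : Set ℕ} {α β s : ℝ} (hs : 0 < s) (hsα : 4 * s ≤ α) (hsβ : 4 * s ≤ β)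
    (hαβ : α + β ≤ 1) {kA kB m N f : ℕ}
    (hkA : ∀ k : ℕ, (α - s) * k - kA ≤ cnt A k) (hkB : ∀ k : ℕ, (β - s) * k - kB ≤ cnt B k)
    {e : ℝ} (hes : 5 * e ≤ s ^ 2) (heA : (kA : ℝ) ≤ e * N) (heB : (kB : ℝ) ≤ e * N)
    (hN : 2 ≤ s * N)
    (hL : ((4 * (f + 1) : ℕ) : ℝ) ≤ s * N)
    (hdA : (cnt (halo A m (4 * (f + 1))) (N + 4 * (f + 1)) : ℝ) ≤ e * N)
    (hdB : (cnt (halo B m (4 * (f + 1))) (N + 4 * (f + 1)) : ℝ) ≤ e * N) :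
    (α + β - 9 * s) * N ≤
      cnt {n : ℕ | Set.Icc ((n : ℤ) - f) ((n : ℤ) + f) ⊆ sumsetPlusInterval A B (2 * m)} N := by
  have hs8 : 8 * s ≤ 1 := by linarith
  have hN0 : (0 : ℝ) < N := by
    by_contra! hle
    nlinarith
  have he5 : 5 * (e * N) ≤ s ^ 2 * N := by nlinarith
  have hss : s ^ 2 * N < s * N := by nlinarith [mul_pos hs hN0]
  -- the base points `x` and `y`
  have base : ∀ (D : Set ℕ) (δ : ℝ) (kD : ℕ), 4 * s ≤ δ → (∀ k : ℕ, (δ - s) * k - kD ≤ cnt D k) →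
      (kD : ℝ) ≤ e * N → (cnt (halo D m (4 * (f + 1))) (N + 4 * (f + 1)) : ℝ) ≤ e * N →
      ∃ x, x < N ∧ s * x ≤ s ^ 2 * N ∧ x + 1 ∈ core D m (f + 1) ∧
      ∀ k, x + k ≤ N → (δ - 2 * s) * k + cnt (core D m (f + 1)) x ≤
        cnt (core D m (f + 1)) (x + k) := by
    intro D δ kD hδ hkD hkN hd
    refine exists_base (by linarith) hs hss fun k hk => ?_
    have h1 : (cnt D k : ℝ) ≤ cnt (core D m (f + 1)) k +
        4 * cnt (halo D m (4 * (f + 1))) (N + 4 * (f + 1)) := by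
      exact_mod_cast cnt_core_ge D m (Nat.succ_pos f) hk
    have h2 := hkD k
    linarith
  obtain ⟨x, hxN, hxs, hx, hxk⟩ := base A α kA hsα hkA heA hdA
  obtain ⟨y, hyN, hys, hy, hyk⟩ := base B β kB hsβ hkB heB hdB
  have hx' : (x : ℝ) ≤ s * N := le_of_mul_le_mul_left (by nlinarith) hs
  have hy' : (y : ℝ) ≤ s * N := le_of_mul_le_mul_left (by nlinarith) hs
  have hle : x + y + 4 * (f + 1) ≤ N := by
    have : ((x + y + 4 * (f + 1) : ℕ) : ℝ) ≤ N := by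
      push_cast at hL ⊢
      nlinarith
    exact_mod_cast this
  set n := N - (x + y + 4 * (f + 1)) with hn
  have hn' : (n : ℝ) = N - (x + y + (4 * (f + 1) : ℕ)) := by
    rw [hn, Nat.cast_sub hle]
    push_cast
    ring
  have main := cnt_sum_ge (n := n) (c := α - 2 * s) (d := β - 2 * s) (by linarith) hx hy
    (fun k hk => hxk k (by omega)) (fun k hk => hyk k (by omega))
  have edge : ∀ (D : Set ℕ) (x : ℕ), x + n ≤ N →
      (cnt (halo D m (4 * (f + 1))) (N + 4 * (f + 1)) : ℝ) ≤ e * N →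
      (cnt {p | p ∈ core D m (f + 1) ∧ p - 1 ∉ core D m (f + 1)} (x + n) : ℝ) ≤
        5 * (e * N) + 1 := by
    intro D x hxn hd
    have h1 : (cnt {p | p ∈ core D m (f + 1) ∧ p - 1 ∉ core D m (f + 1)} (x + n) : ℝ) ≤
        5 * cnt (halo D m (4 * (f + 1))) (N + 4 * (f + 1)) + 1 := by
      exact_mod_cast (cnt_mono_right _ hxn).trans (cnt_core_edge D m N (Nat.succ_pos f))
    linarith
  have eA := edge A x (by omega) hdA
  have eB := edge B y (by omega) hdB
  have hgood : (cnt {w | ∃ p ∈ core A m (f + 1), ∃ q ∈ core B m (f + 1), x + y + w = p + q} n : ℝ)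
      ≤ cnt {n : ℕ | Set.Icc ((n : ℤ) - f) ((n : ℤ) + f) ⊆ sumsetPlusInterval A B (2 * m)} N := by
    refine Nat.cast_le.2 (cnt_le_shift (t := x + y + 4 * (f + 1)) ?_)
    rintro w ⟨p, hp, q, hq, hpq⟩ h1 h2
    refine ⟨?_, by omega, by omega⟩
    have := Icc_subset_of_core hp hq
    rw [← hpq, show x + y + w + 4 * (f + 1) = w + (x + y + 4 * (f + 1)) by ring] at this
    exact this
  have hnl : (1 - 3 * s) * N ≤ n := by
    rw [hn']
    linarith
  have h1 : (α + β - 4 * s) * ((1 - 3 * s) * N) ≤ (α + β - 4 * s) * n :=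
    mul_le_mul_of_nonneg_left hnl (by linarith)
  have h2 : (α + β - 4 * s) * (3 * s * N) ≤ 1 * (3 * s * N) :=
    mul_le_mul_of_nonneg_right (by linarith) (by positivity)
  have h3 : s ^ 2 * N ≤ s * N / 8 := by nlinarith [mul_pos hs hN0]
  nlinarith

theorem stmt_4 (A B : Set ℕ) (α β : ℝ)
    (hA : lowerDensityNat A = α) (hα : 0 < α)
    (hB : lowerDensityNat B = β) (hβ : 0 < β) :
    ∀ ε : ℝ, 0 < ε → ∀ f : ℕ → ℕ, StrictMono f → ∃ mf : ℕ,
      min (α + β - ε) 1 ≤ lowerDensityNat {n : ℕ | ∃ m < mf,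
        Set.Icc ((n : ℤ) - f m) ((n : ℤ) + f m) ⊆ sumsetPlusInterval A B m} := by
  intro ε hε f _
  rcases lt_or_ge 1 (α + β) with hαβ | hαβ
  · exact ⟨1, (min_le_right _ _).trans (case_large (by rw [hA, hB]; exact hαβ) f)⟩
  obtain ⟨s, hs, hsε, hsα, hsβ⟩ : ∃ s : ℝ, 0 < s ∧ 9 * s ≤ ε ∧ 4 * s ≤ α ∧ 4 * s ≤ β := by
    refine ⟨min (ε / 9) (min (α / 4) (β / 4)), by positivity, ?_, ?_, ?_⟩
    · linarith [min_le_left (ε / 9) (min (α / 4) (β / 4))]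
    · linarith [min_le_right (ε / 9) (min (α / 4) (β / 4)), min_le_left (α / 4) (β / 4)]
    · linarith [min_le_right (ε / 9) (min (α / 4) (β / 4)), min_le_right (α / 4) (β / 4)]
  obtain ⟨kA, hkA⟩ := exists_cnt_ge (A := A) (c := α - s) (by linarith) (by linarith)
  obtain ⟨kB, hkB⟩ := exists_cnt_ge (A := B) (c := β - s) (by linarith) (by linarith)
  obtain ⟨K, hK⟩ := exists_nat_gt (4 / (s ^ 2 / 5))
  have he : 0 < s ^ 2 / 5 := by positivity
  have hK0 : (0 : ℝ) < K := lt_trans (by positivity) hK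
  have hK0' : 0 < K := by exact_mod_cast hK0
  rw [div_lt_iff₀ he] at hK
  refine ⟨2 * scale f K + 1, (min_le_left _ _).trans (le_lowerDensityNat fun c hc => ?_)⟩
  have hlin : ∀ (t : ℝ) (a : ℝ), 0 < t → ∀ᶠ N : ℕ in atTop, a ≤ t * N := fun t a ht =>
    (tendsto_natCast_atTop_atTop.const_mul_atTop ht).eventually_ge_atTop a
  filter_upwards [hlin _ kA he, hlin _ kB he, hlin s 2 hs, hlin s (scale f K) hs,
    eventually_ge_atTop (scale f K)] with N h1 h2 h3 h4 h5
  obtain ⟨i, hi, hd⟩ := exists_scale A B f (N + N) hK0'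
  set L := 4 * (f (2 * scale f i) + 1) with hL
  have hLK : scale f i + L ≤ scale f K := scale_mono f (Nat.succ_le_of_lt hi)
  have hd' : (K : ℝ) * (cnt (halo A (scale f i) L) (N + N) + cnt (halo B (scale f i) L) (N + N)) ≤
      4 * N := by
    have : K * (cnt (halo A (scale f i) L) (N + N) + cnt (halo B (scale f i) L) (N + N)) ≤
      4 * N := by omega
    exact_mod_cast this
  have hsum : (cnt (halo A (scale f i) L) (N + N) : ℝ) + cnt (halo B (scale f i) L) (N + N) ≤
      s ^ 2 / 5 * N := by
    refine le_of_mul_le_mul_left (hd'.trans ?_) hK0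
    nlinarith [(Nat.cast_nonneg N : (0 : ℝ) ≤ N)]
  have hAm : (cnt (halo A (scale f i) L) (N + L) : ℝ) ≤ cnt (halo A (scale f i) L) (N + N) := by
    exact_mod_cast cnt_mono_right _ (by omega)
  have hBm : (cnt (halo B (scale f i) L) (N + L) : ℝ) ≤ cnt (halo B (scale f i) L) (N + N) := by
    exact_mod_cast cnt_mono_right _ (by omega)
  have hA0 : (0 : ℝ) ≤ cnt (halo A (scale f i) L) (N + N) := by positivity
  have hB0 : (0 : ℝ) ≤ cnt (halo B (scale f i) L) (N + N) := by positivity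
  have hLs : ((L : ℕ) : ℝ) ≤ s * N :=
    le_trans (by exact_mod_cast (by omega : L ≤ scale f K)) h4
  have key := cnt_good_ge (m := scale f i) (N := N) (f := f (2 * scale f i)) hs hsα hsβ hαβ hkA hkB
    (e := s ^ 2 / 5) (by linarith) h1 h2 h3 hLs (by linarith) (by linarith)
  have hc' : c * N ≤ (α + β - 9 * s) * N :=
    mul_le_mul_of_nonneg_right (by linarith) (Nat.cast_nonneg N)
  refine hc'.trans (key.trans ?_)
  exact Nat.cast_le.2 <| cnt_mono fun n hn _ _ => ⟨2 * scale f i, by omega, hn⟩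
end
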